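/- Let α ≥ 0 and let x₀ > 0 satisfy α ≤ g(x₀), where g(x) = (1 + x)·ln(1 + 1/x)/√(2x + 1). Then the function f_α(x) = ln(1 + 1/x) − α·√(2x + 1)/(1 + x) is convex on the interval (0, x₀]. -/

import Mathlib

/-- The threshold function `g(x) = (1 + x) · ln(1 + 1/x) / √(2x + 1)` for `x > 0`. -/
noncomputable def g (x : ℝ) : ℝ := (1 + x) * Real.log (1 + 1 / x) / Real.sqrt (2 * x + 1)

/-- The finite-blocklength rate as a function of the inverse SINR:
`f_α(x) = ln(1 + 1/x) − α·√(2x + 1)/(1 + x)`. -/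
noncomputable def fα (α x : ℝ) : ℝ :=
  Real.log (1 + 1 / x) - α * Real.sqrt (2 * x + 1) / (1 + x)

/-!
Since `ln(1 + 1/x) ≤ 1/x`, the threshold `g(x)` is at most `(1 + x) / (x√(2x + 1))`, which is
decreasing in `x`; hence `α ≤ g(x₀)` gives `α ≤ (1 + x) / (x√(2x + 1))` on all of `(0, x₀]`.
In the second derivative of `f_α`, bounding `3x² − 1` by `3x²` and inserting the bound on `α`
reduces nonnegativity to `3x³ ≤ (2x + 1)³`.
-/

/-- The derivative of `f_α` at `x > 0`. -/
noncomputable def fαDeriv (α x : ℝ) : ℝ :=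
  -1 / (x * (1 + x)) + α * (x / (√(2 * x + 1) * (1 + x) ^ 2))

/-- The second derivative of `f_α` at `x > 0`. -/
noncomputable def fαSecondDeriv (α x : ℝ) : ℝ :=
  (2 * x + 1) / (x * (1 + x)) ^ 2 - α * ((3 * x ^ 2 - 1) / (√(2 * x + 1) ^ 3 * (1 + x) ^ 3))

section Derivatives

variable {x : ℝ}

theorem hasDerivAt_log_one_add_one_div (hx : x ≠ 0) (hx' : 1 + x ≠ 0) :
    HasDerivAt (fun y : ℝ => Real.log (1 + 1 / y)) (-1 / (x * (1 + x))) x := by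
  have hfrac : 1 + 1 / x = (1 + x) / x := by rw [one_add_div hx, add_comm]
  have hinner : HasDerivAt (fun y : ℝ => 1 + 1 / y) (-(x ^ 2)⁻¹) x := by
    simpa using (hasDerivAt_inv hx).const_add 1
  refine (hinner.log (hfrac ▸ div_ne_zero hx' hx)).congr_deriv ?_
  rw [hfrac]
  field_simp

theorem hasDerivAt_neg_one_div_mul_one_add (hx : x ≠ 0) (hx' : 1 + x ≠ 0) :
    HasDerivAt (fun y : ℝ => -1 / (y * (1 + y))) ((2 * x + 1) / (x * (1 + x)) ^ 2) x := by
  have hden : HasDerivAt (fun y : ℝ => y * (1 + y)) (1 * (1 + x) + x * 1) x :=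
    (hasDerivAt_id' x).fun_mul ((hasDerivAt_id' x).const_add 1)
  refine ((hasDerivAt_const x (-1)).fun_div hden (mul_ne_zero hx hx')).congr_deriv ?_
  ring

theorem hasDerivAt_sqrt_two_mul_add_one (hx : -1 / 2 < x) :
    HasDerivAt (fun y : ℝ => √(2 * y + 1)) (1 / √(2 * x + 1)) x := by
  have hlin : HasDerivAt (fun y : ℝ => 2 * y + 1) 2 x := by
    simpa using ((hasDerivAt_id' x).const_mul 2).add_const 1
  refine (hlin.sqrt (by linarith)).congr_deriv ?_
  field_simp

theorem hasDerivAt_sqrt_div_one_add (hx : -1 / 2 < x) :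
    HasDerivAt (fun y : ℝ => √(2 * y + 1) / (1 + y))
      (-(x / (√(2 * x + 1) * (1 + x) ^ 2))) x := by
  have hpos : 0 < 1 + x := by linarith
  have hs : 0 < √(2 * x + 1) := Real.sqrt_pos.mpr (by linarith)
  have hsq : √(2 * x + 1) ^ 2 = 2 * x + 1 := Real.sq_sqrt (by linarith)
  refine ((hasDerivAt_sqrt_two_mul_add_one hx).fun_div
    ((hasDerivAt_id' x).const_add 1) hpos.ne').congr_deriv ?_
  field_simp
  linear_combination -hsq

theorem hasDerivAt_div_sqrt_mul_one_add_sq (hx : -1 / 2 < x) :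
    HasDerivAt (fun y : ℝ => y / (√(2 * y + 1) * (1 + y) ^ 2))
      (-((3 * x ^ 2 - 1) / (√(2 * x + 1) ^ 3 * (1 + x) ^ 3))) x := by
  have hpos : 0 < 1 + x := by linarith
  have hs : 0 < √(2 * x + 1) := Real.sqrt_pos.mpr (by linarith)
  have hsq : √(2 * x + 1) ^ 2 = 2 * x + 1 := Real.sq_sqrt (by linarith)
  have hden := (hasDerivAt_sqrt_two_mul_add_one hx).fun_mul
    (((hasDerivAt_id' x).const_add 1).fun_pow 2)
  refine ((hasDerivAt_id' x).fun_div hden (by positivity)).congr_deriv ?_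
  field_simp
  rw [hsq]
  push_cast
  ring

theorem hasDerivAt_fα (α : ℝ) (hx : 0 < x) : HasDerivAt (fα α) (fαDeriv α x) x := by
  have hfα : fα α = fun y => Real.log (1 + 1 / y) - α * (√(2 * y + 1) / (1 + y)) := by
    ext y
    rw [fα, mul_div_assoc]
  rw [hfα]
  refine ((hasDerivAt_log_one_add_one_div hx.ne' (by positivity)).fun_sub
    ((hasDerivAt_sqrt_div_one_add (by linarith)).const_mul α)).congr_deriv ?_
  rw [fαDeriv, mul_neg, sub_neg_eq_add]

theorem hasDerivAt_fαDeriv (α : ℝ) (hx : 0 < x) :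
    HasDerivAt (fαDeriv α) (fαSecondDeriv α x) x := by
  refine ((hasDerivAt_neg_one_div_mul_one_add hx.ne' (by positivity)).fun_add
    ((hasDerivAt_div_sqrt_mul_one_add_sq (by linarith)).const_mul α)).congr_deriv ?_
  rw [fαSecondDeriv, mul_neg, ← sub_eq_add_neg]

end Derivatives

theorem g_le_one_add_div_mul_sqrt {x : ℝ} (hx : 0 < x) : g x ≤ (1 + x) / (x * √(2 * x + 1)) := by
  have hlog : Real.log (1 + 1 / x) ≤ 1 / x := by
    linarith [Real.log_le_sub_one_of_pos (show 0 < 1 + 1 / x by positivity)]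
  calc g x ≤ (1 + x) * (1 / x) / √(2 * x + 1) := by unfold g; gcongr
    _ = (1 + x) / (x * √(2 * x + 1)) := by rw [mul_one_div, div_div]

theorem antitoneOn_one_add_div_mul_sqrt :
    AntitoneOn (fun x : ℝ => (1 + x) / (x * √(2 * x + 1))) (Set.Ioi 0) := by
  have hsplit {x : ℝ} (hx : 0 < x) :
      (1 + x) / (x * √(2 * x + 1)) = (1 / x + 1) / √(2 * x + 1) := by
    rw [← div_div, add_div, div_self hx.ne']
  intro x (hx : 0 < x) y (hy : 0 < y) hxy
  simp only [hsplit hx, hsplit hy]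
  gcongr

theorem fαSecondDeriv_nonneg {α x : ℝ} (hα : 0 ≤ α) (hx : 0 < x)
    (hle : α ≤ (1 + x) / (x * √(2 * x + 1))) :
    0 ≤ fαSecondDeriv α x := by
  have hs4 : √(2 * x + 1) ^ 4 = (2 * x + 1) ^ 2 := by
    rw [pow_mul _ 2 2, Real.sq_sqrt (by linarith)]
  have hcube : 3 * x ^ 3 ≤ (2 * x + 1) ^ 3 := by nlinarith [pow_pos hx 3, pow_pos hx 2]
  refine sub_nonneg.mpr ?_
  calc α * ((3 * x ^ 2 - 1) / (√(2 * x + 1) ^ 3 * (1 + x) ^ 3))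
      ≤ α * (3 * x ^ 2 / (√(2 * x + 1) ^ 3 * (1 + x) ^ 3)) := by gcongr; linarith
    _ ≤ (1 + x) / (x * √(2 * x + 1)) * (3 * x ^ 2 / (√(2 * x + 1) ^ 3 * (1 + x) ^ 3)) := by gcongr
    _ = 3 * x ^ 3 / (√(2 * x + 1) ^ 4 * (x * (1 + x)) ^ 2) := by field_simp
    _ ≤ (2 * x + 1) ^ 3 / (√(2 * x + 1) ^ 4 * (x * (1 + x)) ^ 2) := by gcongr
    _ = (2 * x + 1) / (x * (1 + x)) ^ 2 := by rw [hs4]; field_simp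

theorem fα_convexOn_general {α x₀ : ℝ} (hα : 0 ≤ α)
    (hle : α ≤ (1 + x₀) / (x₀ * √(2 * x₀ + 1))) : ConvexOn ℝ (Set.Ioc 0 x₀) (fα α) := by
  refine convexOn_of_hasDerivWithinAt2_nonneg (convex_Ioc 0 x₀)
    (fun x hx => (hasDerivAt_fα α hx.1).continuousAt.continuousWithinAt)
    (fun x hx => (hasDerivAt_fα α (interior_subset hx).1).hasDerivWithinAt)
    (fun x hx => (hasDerivAt_fαDeriv α (interior_subset hx).1).hasDerivWithinAt)
    (fun x hx => ?_)
  obtain ⟨hx, hxx₀⟩ := interior_subset hx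
  exact fαSecondDeriv_nonneg hα hx
    (hle.trans (antitoneOn_one_add_div_mul_sqrt hx (hx.trans_le hxx₀) hxx₀))

/-- If `α ≥ 0` and `x₀ > 0` satisfy `α ≤ g(x₀)`, then `f_α` is convex on `(0, x₀]`. -/
theorem fα_convexOn (α x₀ : ℝ) (hα : 0 ≤ α) (hx₀ : 0 < x₀) (hg : α ≤ g x₀) :
    ConvexOn ℝ (Set.Ioc 0 x₀) (fα α) :=
  fα_convexOn_general hα (hg.trans (g_le_one_add_div_mul_sqrt hx₀))
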